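/- Let $(A, \mathfrak{m})$ be a Cohen-Macaulay local ring of dimension $d > 0$ with infinite residue field, $I$ an $\mathfrak{m}$-primary ideal, and $Q$ a minimal reduction of $I$. If $e_1(I) = e_0(I) - \ell_A(A/I) + 1$, then $I^3 = QI^2$. -/

import Mathlib

open IsLocalRing

/-- A Noetherian local ring is Cohen–Macaulay of dimension `d` iff its Krull dimension
is `d` and there is a regular sequence of length `d` in the maximal ideal. -/
def IsCohenMacaulayLocal (A : Type*) [CommRing A] [IsLocalRing A] (d : ℕ) : Prop :=
  ringKrullDim A = d ∧
    ∃ rs : List A, rs.length = d ∧ (∀ x ∈ rs, x ∈ maximalIdeal A) ∧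
      RingTheory.Sequence.IsRegular A rs

/-- `I` is primary to the maximal ideal (i.e. `𝔪`-primary). -/
def IsPrimaryToMax (A : Type*) [CommRing A] [IsLocalRing A] (I : Ideal A) : Prop :=
  I ≤ maximalIdeal A ∧ maximalIdeal A ≤ I.radical

/-- The length of a module, as the Krull dimension of its submodule lattice. -/
noncomputable def moduleLength (A M : Type*) [CommRing A] [AddCommGroup M]
    [Module A M] : WithBot ℕ∞ :=
  Order.krullDim (Submodule A M)

/-!
Since `A` is Cohen–Macaulay, `Q` has generators `a` whose associated graded ring is a polynomial
ring, so lengths modulo `I Qⁿ` can be computed by counting monomials. Comparing `ℓ (A ⧸ I Qⁿ)` with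
`ℓ (A ⧸ Iⁿ⁺¹)`, the hypothesis on `e₁` leaves room for rank at most one in the module
`⨁ Iⁿ⁺¹ / I Qⁿ` over the ring of forms in `a`: for `y ∈ I² \ I Q` and `z ∈ I³` there is a relation
`f z ≡ h y`, where `f` and `h` are forms and `f` does not vanish modulo `𝔪`.

If `f` divides `h` modulo `𝔪`, then cancelling `f` gives `z ∈ Q I²`. If `I² ⊄ Q`, divisibility
follows from the relation modulo powers of `Q`. Otherwise `y` is the value of a linear form `Y`. If
the coefficients of `Y` are not cyclic modulo `I`, then `Y` induces two linear forms over `A ⧸ 𝔪`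
that are not proportional, hence coprime, and `f` divides `h`. If they are cyclic, generated by `x`,
then `I² ⊆ (I + (x)) Q` and `x I ⊆ (I + (x)) Q`, from which `I³ ⊆ Q I²` is computed directly.
-/

universe u

section PrimeAvoidance

open CategoryTheory Abelian

variable {A : Type u} [CommRing A]

lemma exists_add_notMem_of_isPrime (S : Finset (Ideal A)) (hS : ∀ p ∈ S, p.IsPrime) (x : A)
    (J : Ideal A) (h : ∀ p ∈ S, x ∈ p → ¬ J ≤ p) : ∃ y ∈ J, ∀ p ∈ S, x + y ∉ p := by
  classical
  induction S using Finset.strongInduction with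
  | H S ih =>
    obtain rfl | hne := S.eq_empty_or_nonempty
    · exact ⟨0, J.zero_mem, by simp⟩
    obtain ⟨p, hp, hmin⟩ := S.exists_minimal hne
    obtain ⟨y, hyJ, hy⟩ := ih (S.erase p) (Finset.erase_ssubset hp)
      (fun q hq ↦ hS q (Finset.mem_of_mem_erase hq)) fun q hq ↦ h q (Finset.mem_of_mem_erase hq)
    by_cases hxy : x + y ∈ p
    · have hJp : ¬ J ≤ p := fun hJ ↦ h p hp ((p.add_mem_iff_left (hJ hyJ)).1 hxy) hJ
      have hinf : ¬ (S.erase p).inf id ≤ p := by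
        rw [(hS p hp).inf_le']
        rintro ⟨q, hq, hqp⟩
        exact Finset.ne_of_mem_erase hq (hqp.antisymm (hmin (Finset.mem_of_mem_erase hq) hqp))
      obtain ⟨z, hz, hzp⟩ := SetLike.not_le_iff_exists.1
        (((hS p hp).inf_le (I := J)).not.2 (not_or.2 ⟨hJp, hinf⟩))
      refine ⟨y + z, J.add_mem hyJ hz.1, fun q hq hmem ↦ ?_⟩
      rw [← add_assoc] at hmem
      obtain rfl | hqp := eq_or_ne q p
      · exact hzp ((q.add_mem_iff_right hxy).1 hmem)
      · have hq' := Finset.mem_erase.2 ⟨hqp, hq⟩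
        exact hy q hq' ((q.add_mem_iff_left (Finset.inf_le (f := id) hq' hz.2)).1 hmem)
    · refine ⟨y, hyJ, fun q hq ↦ ?_⟩
      obtain rfl | hqp := eq_or_ne q p
      · exact hxy
      · exact hy q (Finset.mem_erase.2 ⟨hqp, hq⟩)

lemma span_singleton_add_sup_of_mem (x : A) {y : A} {J : Ideal A} (hy : y ∈ J) :
    Ideal.span {x + y} ⊔ J = Ideal.span {x} ⊔ J := by
  have key (u v : A) (huv : u - v ∈ J) : Ideal.span {u} ⊔ J ≤ Ideal.span {v} ⊔ J := by
    refine sup_le ((Ideal.span_singleton_le_iff_mem _).2 ?_) le_sup_right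
    simpa using add_mem (Ideal.mem_sup_left (Ideal.mem_span_singleton_self v))
      (Ideal.mem_sup_right huv)
  exact (key _ _ (by simpa using hy)).antisymm (key _ _ (by simpa using hy))

variable [IsLocalRing A] [IsNoetherianRing A]

lemma maximalIdeal_notMem_associatedPrimes (M : ModuleCat.{u} A)
    [Subsingleton (Ext (ModuleCat.of A (A ⧸ maximalIdeal A)) M 0)] :
    maximalIdeal A ∉ associatedPrimes A M := by
  intro hm
  obtain ⟨-, f, hf⟩ := (isAssociatedPrime_iff_exists_injective_linearMap _ _).1
    (AssociatedPrimes.mem_iff.1 hm)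
  have : Subsingleton ((A ⧸ maximalIdeal A) →ₗ[A] M) :=
    (Ext.addEquiv₀.trans (ModuleCat.homAddEquiv (M := ModuleCat.of A (A ⧸ maximalIdeal A))
      (N := M))).symm.subsingleton
  have hone : (1 : A ⧸ maximalIdeal A) = 0 := hf (by rw [Subsingleton.elim f 0]; rfl)
  exact one_ne_zero hone

lemma exists_isSMulRegular_add {M : Type*} [AddCommGroup M] [Module A M] [Module.Finite A M]
    (hM : maximalIdeal A ∉ associatedPrimes A M) (x : A) {J : Ideal A}
    (hJ : maximalIdeal A ≤ (Module.annihilator A M ⊔ (Ideal.span {x} ⊔ J)).radical) :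
    ∃ y ∈ J, IsSMulRegular M (x + y) := by
  have hfin := associatedPrimes.finite A M
  have hxJ : ∀ p ∈ hfin.toFinset, x ∈ p → ¬ J ≤ p := by
    intro p hp hxp hJp
    have hass : IsAssociatedPrime p M := hfin.mem_toFinset.1 hp
    have hann : Module.annihilator A M ≤ p := by
      simpa only [Submodule.annihilator_top] using hass.annihilator_le
    have hle : maximalIdeal A ≤ p := hJ.trans <| hass.isPrime.radical_le_iff.2 <|
      sup_le hann (sup_le ((Ideal.span_singleton_le_iff_mem p).2 hxp) hJp)
    exact hM ((maximalIdeal.isMaximal A).eq_of_le hass.isPrime.ne_top hle ▸ hass)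
  obtain ⟨y, hy, hreg⟩ := exists_add_notMem_of_isPrime hfin.toFinset
    (fun p hp ↦ (hfin.mem_toFinset.1 hp).isPrime) x J hxJ
  refine ⟨y, hy, not_not.1 fun hcon ↦ ?_⟩
  obtain ⟨p, hp, hmem⟩ := Set.mem_iUnion₂.1
    ((biUnion_associatedPrimes_eq_compl_regular A M).ge hcon)
  exact hreg p (hfin.mem_toFinset.2 hp) hmem

end PrimeAvoidance

section WeaklyRegular

open CategoryTheory Abelian RingTheory.Sequence

variable {A : Type u} [CommRing A]

lemma subsingleton_ext_quotSMulTop {b : A} {M N : ModuleCat.{u} A} (hb : IsSMulRegular M b) (i : ℕ)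
    [Subsingleton (Ext N M i)] [Subsingleton (Ext N M (i + 1))] :
    Subsingleton (Ext N (ModuleCat.of A (QuotSMulTop b M)) i) := by
  have hi := AddCommGrpCat.isZero_of_iff_subsingleton.mpr ‹Subsingleton (Ext N M i)›
  have hi' := AddCommGrpCat.isZero_of_iff_subsingleton.mpr ‹Subsingleton (Ext N M (i + 1))›
  exact AddCommGrpCat.subsingleton_of_isZero <| ShortComplex.Exact.isZero_of_both_zeros
    (Ext.covariant_sequence_exact₃' N hb.smulShortComplex_shortExact i (i + 1) rfl)
    (hi.eq_zero_of_src _) (hi'.eq_zero_of_tgt _)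

lemma annihilator_sup_span_singleton_le_annihilator_quotSMulTop (b : A) (M : Type*)
    [AddCommGroup M] [Module A M] :
    Module.annihilator A M ⊔ Ideal.span {b} ≤ Module.annihilator A (QuotSMulTop b M) :=
  sup_le (LinearMap.annihilator_le_of_surjective _ (Submodule.mkQ_surjective _))
    ((Ideal.span_singleton_le_iff_mem _).2 (QuotSMulTop.mem_annihilator _ _))

lemma exists_isWeaklyRegular_ofList_eq [IsLocalRing A] [IsNoetherianRing A] (l : List A)
    (M : ModuleCat.{u} A) [Module.Finite A M]
    (hext : ∀ i < l.length, Subsingleton (Ext (ModuleCat.of A (A ⧸ maximalIdeal A)) M i))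
    (hl : maximalIdeal A ≤ (Module.annihilator A M ⊔ Ideal.ofList l).radical) :
    ∃ l' : List A, l'.length = l.length ∧ IsWeaklyRegular M l' ∧
      Ideal.ofList l' = Ideal.ofList l := by
  induction l generalizing M with
  | nil => exact ⟨[], rfl, .nil _ _, rfl⟩
  | cons a l ih =>
    have := hext 0 (Nat.succ_pos _)
    rw [Ideal.ofList_cons] at hl
    obtain ⟨y, hy, hb⟩ := exists_isSMulRegular_add (maximalIdeal_notMem_associatedPrimes M) a hl
    rw [← span_singleton_add_sup_of_mem a hy, ← sup_assoc] at hl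
    obtain ⟨l', hlen, hl', heq⟩ := ih (ModuleCat.of A (QuotSMulTop (a + y) M))
      (fun i hi ↦
        have := hext i (Nat.lt_succ_of_lt hi)
        have := hext (i + 1) (Nat.succ_lt_succ hi)
        subsingleton_ext_quotSMulTop hb i)
      (hl.trans <| Ideal.radical_mono <| sup_le_sup_right
        (annihilator_sup_span_singleton_le_annihilator_quotSMulTop _ _) _)
    exact ⟨(a + y) :: l', congrArg (· + 1) hlen, (isWeaklyRegular_cons_iff _ _ _).2 ⟨hb, hl'⟩,
      by rw [Ideal.ofList_cons, Ideal.ofList_cons, heq, span_singleton_add_sup_of_mem a hy]⟩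

end WeaklyRegular

section QuasiRegular

open MvPolynomial

variable {A σ : Type*} [CommRing A] {a : σ → A}

lemma mem_mul_span_pow_iff (J : Ideal A) (a : σ → A) (n : ℕ) (y : A) :
    y ∈ J * Ideal.span (Set.range a) ^ n ↔
      ∃ F : MvPolynomial σ A, F.IsHomogeneous n ∧ F ∈ J.map C ∧ eval a F = y := by
  constructor
  · intro hy
    induction hy using Submodule.mul_induction_on' with
    | mem_mul_mem x hx z hz =>
      obtain ⟨p, hp, rfl⟩ := (Ideal.mem_span_pow_iff_exists_isHomogeneous a z).1 hz
      exact ⟨C x * p, hp.C_mul x, Ideal.mul_mem_right _ _ (Ideal.mem_map_of_mem _ hx), by simp⟩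
    | add x _ z _ hx hz =>
      obtain ⟨F, hF, hFJ, rfl⟩ := hx
      obtain ⟨G, hG, hGJ, rfl⟩ := hz
      exact ⟨F + G, hF.add hG, add_mem hFJ hGJ, by simp⟩
  · rintro ⟨F, hF, hFJ, rfl⟩
    rw [eval_eq]
    refine Submodule.sum_mem _ fun α hα ↦ Ideal.mul_mem_mul (mem_map_C_iff.1 hFJ α) ?_
    have hdeg : α.degree = n :=
      not_imp_comm.1 hF.coeff_eq_zero (mem_support_iff.1 hα)
    exact (Ideal.mem_span_pow_iff_exists_isHomogeneous a _).2 ⟨monomial α 1,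
      isHomogeneous_monomial _ hdeg, by rw [eval_monomial, one_mul, Finsupp.prod]⟩

/-- The elements `a i` are quasi-regular: a form vanishing at `a` has all its coefficients in the
ideal generated by the `a i`. Equivalently, the associated graded ring of that ideal is a polynomial
ring in the initial forms of the `a i`. -/
def IsQuasiRegularFamily (a : σ → A) : Prop :=
  ∀ n (F : MvPolynomial σ A), F.IsHomogeneous n → eval a F = 0 →
    F ∈ (Ideal.span (Set.range a)).map C

lemma IsQuasiRegularFamily.mem_map_of_eval_mem (ha : IsQuasiRegularFamily a)
    {J : Ideal A} (hJ : Ideal.span (Set.range a) ≤ J) {n : ℕ} {F : MvPolynomial σ A}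
    (hF : F.IsHomogeneous n) (h : eval a F ∈ J * Ideal.span (Set.range a) ^ n) :
    F ∈ J.map C := by
  obtain ⟨G, hG, hGJ, hGF⟩ := (mem_mul_span_pow_iff J a n _).1 h
  have hFG := ha n (F - G) (hF.sub hG) (by simp [hGF])
  simpa using add_mem (Ideal.map_mono hJ hFG) hGJ

lemma IsQuasiRegularFamily.mem_span_pow_of_mul_mem (ha : IsQuasiRegularFamily a) {b : A}
    (hb : IsSMulRegular (A ⧸ Ideal.span (Set.range a)) b) (k : ℕ) {x : A}
    (hx : b * x ∈ Ideal.span (Set.range a) ^ k) : x ∈ Ideal.span (Set.range a) ^ k := by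
  induction k with
  | zero => simp
  | succ k ih =>
    obtain ⟨g, hg, rfl⟩ := (Ideal.mem_span_pow_iff_exists_isHomogeneous a _).1
      (ih (Ideal.pow_le_pow_right k.le_succ hx))
    have hbg := ha.mem_map_of_eval_mem le_rfl (hg.C_mul b) (by simpa [← pow_succ'] using hx)
    rw [pow_succ']
    refine (mem_mul_span_pow_iff _ a k _).2 ⟨g, hg, mem_map_C_iff.2 fun α ↦ ?_, rfl⟩
    exact mem_of_isSMulRegular_quotient_of_smul_mem hb (by simpa using mem_map_C_iff.1 hbg α)

lemma homogeneousComponent_mul_of_isHomogeneous {f : MvPolynomial σ A} {m : ℕ}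
    (hf : f.IsHomogeneous m) (n : ℕ) (g : MvPolynomial σ A) :
    homogeneousComponent (m + n) (f * g) = f * homogeneousComponent n g := by
  let _ := gradedAlgebra (σ := σ) (R := A)
  have hdecomp (p : MvPolynomial σ A) (i : ℕ) :
      (DirectSum.decompose (homogeneousSubmodule σ A) p i : MvPolynomial σ A) =
        homogeneousComponent i p := decomposition.decompose'_apply p i
  rw [← hdecomp, ← hdecomp, DirectSum.coe_decompose_mul_add_of_left_mem _ hf]

lemma exists_eq_X_zero_mul_add_rename_succ {d n : ℕ} {F : MvPolynomial (Fin (d + 1)) A}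
    (hF : F.IsHomogeneous (n + 1)) :
    ∃ H : MvPolynomial (Fin (d + 1)) A, ∃ G : MvPolynomial (Fin d) A, H.IsHomogeneous n ∧
      G.IsHomogeneous (n + 1) ∧ F = X 0 * H + rename Fin.succ G := by
  obtain ⟨H, G, hHG⟩ : ∃ H G, F = X 0 * H + rename Fin.succ G := by
    clear hF
    induction F using MvPolynomial.induction_on with
    | C c => exact ⟨0, C c, by simp⟩
    | add F F' hF hF' =>
      obtain ⟨H, G, rfl⟩ := hF
      obtain ⟨H', G', rfl⟩ := hF'
      exact ⟨H + H', G + G', by rw [map_add]; ring⟩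
    | mul_X F i hF =>
      obtain ⟨H, G, rfl⟩ := hF
      cases i using Fin.cases with
      | zero => exact ⟨X 0 * H + rename Fin.succ G, 0, by rw [map_zero]; ring⟩
      | succ i => exact ⟨H * X i.succ, G * X i, by rw [map_mul, rename_X]; ring⟩
  refine ⟨homogeneousComponent n H, homogeneousComponent (n + 1) G,
    homogeneousComponent_isHomogeneous .., homogeneousComponent_isHomogeneous .., ?_⟩
  rw [rename_homogeneousComponent, ← homogeneousComponent_mul_of_isHomogeneous
    (isHomogeneous_X _ _), add_comm 1 n, ← map_add, ← hHG, homogeneousComponent_eq_self hF]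

lemma rename_mem_map_C {τ : Type*} {f : σ → τ} {J : Ideal A} {F : MvPolynomial σ A}
    (hF : F ∈ J.map C) : rename f F ∈ J.map C := by
  have hmem := Ideal.mem_map_of_mem
    (rename f : MvPolynomial σ A →ₐ[A] MvPolynomial τ A).toRingHom hF
  rwa [Ideal.map_map, AlgHom.toRingHom_eq_coe, ← algebraMap_eq, AlgHom.comp_algebraMap] at hmem

lemma IsQuasiRegularFamily.cons {d : ℕ} {a : Fin d → A} (ha : IsQuasiRegularFamily a) {b : A}
    (hb : IsSMulRegular (A ⧸ Ideal.span (Set.range a)) b) :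
    IsQuasiRegularFamily (Fin.cons b a : Fin (d + 1) → A) := by
  intro n
  have hspan : Ideal.span (Set.range (Fin.cons b a : Fin (d + 1) → A)) =
      Ideal.span {b} ⊔ Ideal.span (Set.range a) := by
    rw [Fin.range_cons, Ideal.span_insert]
  rw [hspan]
  induction n with
  | zero =>
    intro F hF hF0
    obtain ⟨c, rfl⟩ : ∃ c, F = C c := ⟨_, totalDegree_eq_zero_iff_eq_C.1
      ((totalDegree_zero_iff_isHomogeneous _).2 hF)⟩
    rw [eval_C] at hF0
    simp [hF0]
  | succ n ih =>
    intro F hF hF0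
    obtain ⟨H, G, hH, hG, rfl⟩ := exists_eq_X_zero_mul_add_rename_succ hF
    have hsum : b * eval (Fin.cons b a : Fin (d + 1) → A) H + eval a G = 0 := by
      simpa [eval_rename, Function.comp_def] using hF0
    have hHmem : eval (Fin.cons b a : Fin (d + 1) → A) H ∈ Ideal.span (Set.range a) ^ (n + 1) := by
      refine ha.mem_span_pow_of_mul_mem hb _ ?_
      rw [eq_neg_of_add_eq_zero_left hsum]
      exact neg_mem ((Ideal.mem_span_pow_iff_exists_isHomogeneous a _).2 ⟨G, hG, rfl⟩)
    have hHmap : H ∈ (Ideal.span {b} ⊔ Ideal.span (Set.range a)).map C := by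
      obtain ⟨K, hK, hKmap, hKH⟩ := (mem_mul_span_pow_iff _ (Fin.cons b a) n _).1
        (pow_succ' (Ideal.span (Set.range (Fin.cons b a : Fin (d + 1) → A))) n ▸
          Ideal.pow_right_mono (hspan ▸ le_sup_right) _ hHmem)
      have hHK := ih (H - K) (hH.sub hK) (by simp [hKH])
      exact sub_add_cancel H K ▸ add_mem hHK (hspan ▸ hKmap)
    have hGmap : G ∈ (Ideal.span {b} ⊔ Ideal.span (Set.range a)).map C := by
      obtain ⟨h, hh, hhH⟩ := (Ideal.mem_span_pow_iff_exists_isHomogeneous a _).1 hHmem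
      have hGh := ha (n + 1) (C b * h + G) ((hh.C_mul b).add hG) (by simpa [hhH] using hsum)
      refine (Ideal.add_mem_iff_right _ (Ideal.mul_mem_right h _ ?_)).1
        (Ideal.map_mono le_sup_right hGh)
      exact Ideal.mem_map_of_mem _ (Ideal.mem_sup_left (Ideal.mem_span_singleton_self b))
    exact add_mem (Ideal.mul_mem_left _ _ hHmap) (rename_mem_map_C hGmap)

open CategoryTheory Abelian RingTheory.Sequence

lemma isQuasiRegularFamily_get {l : List A} (hl : IsWeaklyRegular A l.reverse) :
    IsQuasiRegularFamily l.get := by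
  induction l with
  | nil =>
    intro n F _ hF0
    have : IsEmpty (Fin ([] : List A).length) := Fin.isEmpty
    rw [eq_C_of_isEmpty F, eval_C] at hF0
    rw [eq_C_of_isEmpty F, hF0, C_0]
    exact zero_mem _
  | cons b l ih =>
    rw [List.reverse_cons, isWeaklyRegular_append_iff, isWeaklyRegular_singleton_iff] at hl
    have hspan : (Ideal.ofList l.reverse • ⊤ : Submodule A A) = Ideal.span (Set.range l.get) := by
      rw [smul_eq_mul, Ideal.mul_top, Set.range_list_get]
      simp only [Ideal.ofList, List.mem_reverse]
    rw [hspan] at hl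
    have hget : (b :: l).get = Fin.cons b l.get := by
      funext i
      cases i using Fin.cases <;> rfl
    rw [hget]
    exact (ih hl.1).cons hl.2

lemma exists_isQuasiRegularFamily [IsLocalRing A] [IsNoetherianRing A] {d : ℕ} {rs : List A}
    (hd : d ≤ rs.length) (hmem : ∀ x ∈ rs, x ∈ maximalIdeal A) (hrs : IsRegular A rs)
    (a : Fin d → A) (ha : maximalIdeal A ≤ (Ideal.span (Set.range a)).radical) :
    ∃ b : Fin d → A, Ideal.span (Set.range b) = Ideal.span (Set.range a) ∧
      IsQuasiRegularFamily b := by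
  have hofList : Ideal.ofList (List.ofFn a) = Ideal.span (Set.range a) := by
    simp only [Ideal.ofList, List.mem_ofFn, Set.range]
  have hlt : maximalIdeal A • (⊤ : Submodule A A) < ⊤ := by
    rw [smul_eq_mul, Ideal.mul_top]
    exact (maximalIdeal.isMaximal A).ne_top.lt_top
  have hext : ∀ i < (List.ofFn a).length, Subsingleton
      (Ext (ModuleCat.of A (A ⧸ maximalIdeal A)) (ModuleCat.of A A) i) := fun i hi ↦
    ModuleCat.subsingleton_ext_of_exists_isRegular (maximalIdeal A) _
      (by rw [Module.support_eq_zeroLocus, Ideal.annihilator_quotient]) _ hlt rs hmem hrs i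
      ((List.length_ofFn ▸ hi).trans_le hd)
  obtain ⟨l, hlen, hl, hspan⟩ := exists_isWeaklyRegular_ofList_eq (List.ofFn a)
    (ModuleCat.of A A) hext (ha.trans (Ideal.radical_mono (hofList ▸ le_sup_right)))
  obtain rfl : l.reverse.length = d := by rw [List.length_reverse, hlen, List.length_ofFn]
  refine ⟨l.reverse.get, ?_, isQuasiRegularFamily_get (l.reverse_reverse.symm ▸ hl)⟩
  rw [← hofList, ← hspan, Set.range_list_get]
  simp only [Ideal.ofList, List.mem_reverse]

end QuasiRegular

section CoefficientIdeals

open MvPolynomial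

variable {A σ : Type*} [CommRing A]

/-- The content of a polynomial, as an ideal: it is generated by the coefficients. Being finitely
generated, it makes Nakayama's lemma available for a single polynomial. -/
def coeffIdeal (F : MvPolynomial σ A) : Ideal A :=
  Ideal.span F.coeffs

lemma mem_map_C_iff_coeffIdeal_le {F : MvPolynomial σ A} {J : Ideal A} :
    F ∈ J.map C ↔ coeffIdeal F ≤ J := by
  rw [mem_map_C_iff, coeffIdeal, Ideal.span_le]
  refine ⟨fun h x hx ↦ ?_, fun h α ↦ ?_⟩
  · obtain ⟨α, -, rfl⟩ := mem_coeffs_iff.1 hx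
    exact h α
  · by_cases hα : coeff α F = 0
    · exact hα ▸ J.zero_mem
    · exact h (coeff_mem_coeffs α hα)

lemma mem_map_C_coeffIdeal (F : MvPolynomial σ A) : F ∈ (coeffIdeal F).map C :=
  mem_map_C_iff_coeffIdeal_le.2 le_rfl

lemma homogeneousComponent_mem_map_C {J : Ideal A} {F : MvPolynomial σ A} (hF : F ∈ J.map C)
    (n : ℕ) : homogeneousComponent n F ∈ J.map C := by
  classical
  refine mem_map_C_iff.2 fun α ↦ ?_
  rw [coeff_homogeneousComponent]
  split_ifs
  exacts [mem_map_C_iff.1 hF α, J.zero_mem]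

lemma exists_sub_C_mul_mem_map_C {J K : Ideal A} {x : A} (hJ : J ≤ K ⊔ Ideal.span {x})
    {F : MvPolynomial σ A} (hF : F ∈ J.map C) : ∃ G, F - C x * G ∈ K.map C := by
  have hF' := Ideal.map_mono hJ hF
  rw [Ideal.map_sup, Ideal.map_span, Set.image_singleton] at hF'
  obtain ⟨k, hk, y, hy, rfl⟩ := Submodule.mem_sup.1 hF'
  obtain ⟨G, rfl⟩ := Ideal.mem_span_singleton.1 hy
  exact ⟨G, by rwa [add_sub_cancel_right]⟩

lemma exists_isHomogeneous_sub_C_mul_mem_map_C {J K : Ideal A} {x : A}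
    (hJ : J ≤ K ⊔ Ideal.span {x}) {F : MvPolynomial σ A} {n : ℕ} (hF : F.IsHomogeneous n)
    (hFJ : F ∈ J.map C) : ∃ G, G.IsHomogeneous n ∧ F - C x * G ∈ K.map C := by
  obtain ⟨G, hG⟩ := exists_sub_C_mul_mem_map_C hJ hFJ
  refine ⟨homogeneousComponent n G, homogeneousComponent_isHomogeneous n G, ?_⟩
  have hcomp := homogeneousComponent_mem_map_C hG n
  rwa [map_sub, homogeneousComponent_C_mul, homogeneousComponent_eq_self hF] at hcomp

end CoefficientIdeals

section LocalRing

open MvPolynomial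

variable {A σ : Type*} [CommRing A] [IsLocalRing A]

lemma map_residue_eq_zero_iff {F : MvPolynomial σ A} :
    map (residue A) F = 0 ↔ F ∈ (maximalIdeal A).map C := by
  rw [mem_map_C_iff, MvPolynomial.ext_iff]
  simp only [coeff_map, coeff_zero, residue_eq_zero_iff]

lemma mem_maximalIdeal_of_mul_mem {K : Ideal A} {c x : A} (hx : x ∉ K) (hcx : c * x ∈ K) :
    c ∈ maximalIdeal A :=
  (mem_maximalIdeal _).2 fun hc ↦ hx ((K.unit_mul_mem_iff_mem hc).1 hcx)

lemma map_residue_eq_zero_of_C_mul_mem {K : Ideal A} {x : A} (hx : x ∉ K) {F : MvPolynomial σ A}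
    (hF : C x * F ∈ K.map C) : map (residue A) F = 0 := by
  refine map_residue_eq_zero_iff.2 (mem_map_C_iff.2 fun α ↦ mem_maximalIdeal_of_mul_mem hx ?_)
  rw [mul_comm, ← coeff_C_mul]
  exact mem_map_C_iff.1 hF α

lemma mem_map_C_of_map_residue_eq_zero {K : Ideal A} {x : A}
    (hx : ∀ c ∈ maximalIdeal A, c * x ∈ K) {F G : MvPolynomial σ A}
    (hG : F - C x * G ∈ K.map C) (hG0 : map (residue A) G = 0) : F ∈ K.map C := by
  refine (Submodule.sub_mem_iff_left _ (mem_map_C_iff.2 fun α ↦ ?_)).1 hG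
  rw [coeff_C_mul, mul_comm]
  exact hx _ (mem_map_C_iff.1 (map_residue_eq_zero_iff.1 hG0) α)

lemma coeff_map_residue_eq_zero_iff {K : Ideal A} {x : A} (hxK : x ∉ K)
    (hx : ∀ c ∈ maximalIdeal A, c * x ∈ K) {F G : MvPolynomial σ A}
    (hG : F - C x * G ∈ K.map C) (α : σ →₀ ℕ) :
    coeff α (map (residue A) G) = 0 ↔ coeff α F ∈ K := by
  have hα : coeff α F - coeff α G * x ∈ K := by
    rw [mul_comm, ← coeff_C_mul, ← coeff_sub]
    exact mem_map_C_iff.1 hG α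
  rw [coeff_map, residue_eq_zero_iff]
  refine ⟨fun h ↦ (K.sub_mem_iff_left (hx _ h)).1 hα, fun h ↦ ?_⟩
  exact mem_maximalIdeal_of_mul_mem hxK ((K.sub_mem_iff_right h).1 hα)

lemma map_residue_mul_eq_map_residue_mul {K : Ideal A} {x : A} (hx : x ∉ K)
    {f h F F' G G' : MvPolynomial σ A} (hfh : f * F - h * F' ∈ K.map C)
    (hG : F - C x * G ∈ K.map C) (hG' : F' - C x * G' ∈ K.map C) :
    map (residue A) f * map (residue A) G = map (residue A) h * map (residue A) G' := by
  rw [← map_mul, ← map_mul, ← sub_eq_zero, ← map_sub]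
  refine map_residue_eq_zero_of_C_mul_mem hx ?_
  have hsplit : C x * (f * G - h * G') =
      f * F - h * F' - f * (F - C x * G) + h * (F' - C x * G') := by ring
  rw [hsplit]
  exact add_mem (sub_mem hfh (Ideal.mul_mem_left _ _ hG)) (Ideal.mul_mem_left _ _ hG')

lemma exists_isHomogeneous_sub_mul_mem_map_C {m n : ℕ} {f h : MvPolynomial σ A}
    (hf : f.IsHomogeneous m) (hh : h.IsHomogeneous (m + n))
    (hfh : map (residue A) f ∣ map (residue A) h) :
    ∃ g, g.IsHomogeneous n ∧ h - f * g ∈ (maximalIdeal A).map C := by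
  obtain ⟨g', hg'⟩ := hfh
  obtain ⟨g, rfl⟩ := map_surjective _ residue_surjective g'
  refine ⟨homogeneousComponent n g, homogeneousComponent_isHomogeneous n g, ?_⟩
  have hmem : h - f * g ∈ (maximalIdeal A).map C :=
    map_residue_eq_zero_iff.1 (by rw [map_sub, map_mul, hg', sub_self])
  have hcomp := homogeneousComponent_mem_map_C hmem (m + n)
  rwa [map_sub, homogeneousComponent_mul_of_isHomogeneous hf, homogeneousComponent_eq_self hh]
    at hcomp

-- An ideal `K ≥ I` maximal among those avoiding `x` works, as `x` generates the socle modulo `K`.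
lemma exists_ideal_le_sup_span {I J : Ideal A} {x : A} (hJ : maximalIdeal A * J ≤ I)
    (hx : x ∉ I) : ∃ K : Ideal A, I ≤ K ∧ x ∉ K ∧ J ≤ K ⊔ Ideal.span {x} := by
  obtain ⟨K, hIK, hK⟩ := zorn_le_nonempty₀ {K : Ideal A | x ∉ K} (fun c hc hchain K hKc ↦
    ⟨sSup c, fun hxc ↦ by
      obtain ⟨K', hK', hxK'⟩ := (Submodule.mem_sSup_of_directed ⟨K, hKc⟩ hchain.directedOn).1 hxc
      exact hc hK' hxK', fun _ ↦ le_sSup⟩) I hx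
  refine ⟨K, hIK, hK.prop, fun z hz ↦ ?_⟩
  by_cases hzK : z ∈ K
  · exact Ideal.mem_sup_left hzK
  have hxz : x ∈ K ⊔ Ideal.span {z} := by
    by_contra hxz
    exact hzK (hK.le_of_ge hxz le_sup_left (Ideal.mem_sup_right (Ideal.mem_span_singleton_self z)))
  obtain ⟨w, hw, t, ht, rfl⟩ := Submodule.mem_sup.1 hxz
  obtain ⟨c, rfl⟩ := Ideal.mem_span_singleton'.1 ht
  have hc : IsUnit c := by
    by_contra hc
    exact hK.prop (K.add_mem hw (hIK (hJ (Ideal.mul_mem_mul ((mem_maximalIdeal _).2 hc) hz))))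
  have hmem : w + c * z - w ∈ K ⊔ Ideal.span {w + c * z} :=
    sub_mem (Ideal.mem_sup_right (Ideal.mem_span_singleton_self _)) (Ideal.mem_sup_left hw)
  rwa [add_sub_cancel_left, Ideal.unit_mul_mem_iff_mem _ hc] at hmem

lemma mem_map_C_of_mul_mem {f g : MvPolynomial σ A} (hf : map (residue A) f ≠ 0) {J : Ideal A}
    (hfg : f * g ∈ J.map C) : g ∈ J.map C := by
  rw [mem_map_C_iff_coeffIdeal_le]
  by_contra hgJ
  have hnak : ¬ coeffIdeal g ≤ J ⊔ maximalIdeal A • coeffIdeal g := fun h ↦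
    hgJ (Submodule.le_of_le_smul_of_le_jacobson_bot ⟨g.coeffs, rfl⟩
      (maximalIdeal_le_jacobson _) h)
  obtain ⟨x, hxg, hx⟩ := SetLike.not_le_iff_exists.1 hnak
  obtain ⟨K, hJK, hxK, hgK⟩ := exists_ideal_le_sup_span
    (le_sup_right : maximalIdeal A * coeffIdeal g ≤ _) hx
  obtain ⟨G, hG⟩ := exists_sub_C_mul_mem_map_C hgK (mem_map_C_coeffIdeal g)
  have hfG : map (residue A) (f * G) = 0 := by
    refine map_residue_eq_zero_of_C_mul_mem hxK ?_
    have hsplit : C x * (f * G) = f * g - f * (g - C x * G) := by ring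
    rw [hsplit]
    exact sub_mem (Ideal.map_mono (le_sup_left.trans hJK) hfg) (Ideal.mul_mem_left _ _ hG)
  rw [map_mul] at hfG
  have hgmem : g ∈ K.map C := mem_map_C_of_map_residue_eq_zero
    (fun c hc ↦ hJK (Ideal.mem_sup_right (Ideal.mul_mem_mul hc hxg))) hG
    ((mul_eq_zero.1 hfG).resolve_left hf)
  exact hxK (mem_map_C_iff_coeffIdeal_le.1 hgmem hxg)

variable {a : σ → A}

lemma IsQuasiRegularFamily.mem_pow_of_eval_mul_mem (ha : IsQuasiRegularFamily a)
    {f : MvPolynomial σ A} {n : ℕ} (hf : f.IsHomogeneous n) (hf0 : map (residue A) f ≠ 0)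
    {x : A} {m : ℕ} (hx : eval a f * x ∈ Ideal.span (Set.range a) ^ (n + m)) :
    x ∈ Ideal.span (Set.range a) ^ m := by
  induction m with
  | zero => simp
  | succ m ih =>
    obtain ⟨g, hg, rfl⟩ := (Ideal.mem_span_pow_iff_exists_isHomogeneous a _).1
      (ih (Ideal.pow_le_pow_right (by omega) hx))
    have hfg := ha.mem_map_of_eval_mem le_rfl (hf.mul hg) (by rwa [← pow_succ', map_mul])
    rw [pow_succ']
    exact (mem_mul_span_pow_iff _ a m _).2 ⟨g, hg, mem_map_C_of_mul_mem hf0 hfg, rfl⟩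

lemma IsQuasiRegularFamily.mem_mul_pow_of_eval_mul_mem (ha : IsQuasiRegularFamily a) {J : Ideal A}
    (hJ : Ideal.span (Set.range a) ≤ J) {f : MvPolynomial σ A} {n : ℕ} (hf : f.IsHomogeneous n)
    (hf0 : map (residue A) f ≠ 0) {x : A} {m : ℕ}
    (hx : eval a f * x ∈ J * Ideal.span (Set.range a) ^ (n + m)) :
    x ∈ J * Ideal.span (Set.range a) ^ m := by
  obtain ⟨g, hg, rfl⟩ := (Ideal.mem_span_pow_iff_exists_isHomogeneous a _).1
    (ha.mem_pow_of_eval_mul_mem hf hf0 (Ideal.mul_le_right hx))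
  have hfg := ha.mem_map_of_eval_mem hJ (hf.mul hg) (by rwa [map_mul])
  exact (mem_mul_span_pow_iff _ a m _).2 ⟨g, hg, mem_map_C_of_mul_mem hf0 hfg, rfl⟩

end LocalRing

section LinearForms

open MvPolynomial

lemma dvd_of_mul_eq_mul_of_prime {R : Type*} [CommRing R] [IsDomain R] {f h p q u v : R}
    (hp : Prime p) (hpq : ¬ p ∣ q) (hf : f ≠ 0) (hu : f * u = h * p) (hv : f * v = h * q) :
    f ∣ h := by
  have hcross : u * q = p * v := mul_left_cancel₀ hf (by linear_combination q * hu - p * hv)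
  obtain ⟨g, rfl⟩ := (hp.dvd_or_dvd ⟨v, hcross⟩).resolve_right hpq
  exact ⟨g, mul_right_cancel₀ hp.ne_zero (by linear_combination -hu)⟩

lemma prime_of_isHomogeneous_one {σ k : Type*} [Field k] {L : MvPolynomial σ k}
    (hL : L.IsHomogeneous 1) (hL0 : L ≠ 0) : Prime L := by
  refine (irreducible_of_totalDegree_eq_one (hL.totalDegree hL0) fun c hc ↦ ?_).prime
  refine isUnit_iff_ne_zero.2 fun hc0 ↦ hL0 (MvPolynomial.ext _ _ fun α ↦ ?_)
  rw [coeff_zero, ← zero_dvd_iff, ← hc0]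
  exact hc α

lemma exists_eq_mul_C_of_dvd {σ R : Type*} [CommRing R] {n : ℕ} {f g : MvPolynomial σ R}
    (hf : f.IsHomogeneous n) (hg : g.IsHomogeneous n) (hfg : f ∣ g) : ∃ c, g = f * C c := by
  obtain ⟨q, rfl⟩ := hfg
  have hcomp := homogeneousComponent_mul_of_isHomogeneous hf 0 q
  rw [add_zero, homogeneousComponent_eq_self hg, homogeneousComponent_zero] at hcomp
  exact ⟨_, hcomp⟩

end LinearForms

section Colength

variable {A S : Type*} [CommRing A] [Fintype S]

lemma length_quotient_anti {J K : Ideal A} (h : J ≤ K) :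
    Module.length A (A ⧸ K) ≤ Module.length A (A ⧸ J) :=
  Module.length_le_of_surjective (Submodule.factor h) (Submodule.factor_surjective h)

lemma length_quotient_eq_add (J : Ideal A) (m : S → A) :
    Module.length A (A ⧸ J) = Module.length A (A ⧸ J ⊔ Ideal.span (Set.range m)) +
      Module.length A ((S → A) ⧸ LinearMap.ker (J.mkQ ∘ₗ Fintype.linearCombination A m)) := by
  set φ := J.mkQ ∘ₗ Fintype.linearCombination A m with hφ
  set ψ := (LinearMap.range φ).mkQ ∘ₗ J.mkQ with hψ
  have hψs : Function.Surjective ψ :=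
    (Submodule.mkQ_surjective _).comp (Submodule.mkQ_surjective _)
  have hker : LinearMap.ker ψ = J ⊔ Ideal.span (Set.range m) := by
    rw [hψ, LinearMap.ker_comp, Submodule.ker_mkQ, hφ, LinearMap.range_comp,
      Submodule.comap_map_eq, Submodule.ker_mkQ, Fintype.range_linearCombination, sup_comm]
  rw [Module.length_eq_add_of_exact (LinearMap.range φ).subtype (LinearMap.range φ).mkQ
    (Submodule.subtype_injective _) (Submodule.mkQ_surjective _)
    (LinearMap.exact_subtype_mkQ _), ← (ψ.quotKerEquivOfSurjective hψs).length_eq,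
    ← φ.quotKerEquivRange.length_eq, (Submodule.quotEquivOfEq _ _ hker).length_eq, add_comm]

lemma length_pi_quotient (J : Ideal A) :
    Module.length A ((S → A) ⧸ Submodule.pi Set.univ fun _ : S ↦ J) =
      Fintype.card S * Module.length A (A ⧸ J) := by
  classical
  rw [(Submodule.quotientPi fun _ : S ↦ J).length_eq, Module.length_pi,
    ENat.card_eq_coe_fintype_card]

lemma length_quotient_le_add {J K : Ideal A} {m : S → A} (h : ∀ c ∈ K, ∀ s, c * m s ∈ J) :
    Module.length A (A ⧸ J) ≤ Module.length A (A ⧸ J ⊔ Ideal.span (Set.range m)) +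
      Fintype.card S * Module.length A (A ⧸ K) := by
  rw [length_quotient_eq_add J m, ← length_pi_quotient]
  gcongr
  refine Module.length_le_of_surjective (Submodule.factor fun c hc ↦ ?_)
    (Submodule.factor_surjective _)
  rw [LinearMap.mem_ker, LinearMap.comp_apply, Submodule.mkQ_apply, Submodule.Quotient.mk_eq_zero,
    Fintype.linearCombination_apply]
  exact Submodule.sum_mem _ fun s _ ↦ h _ (hc s trivial) s

lemma add_le_length_quotient {J K : Ideal A} {m : S → A}
    (h : ∀ c : S → A, ∑ s, c s * m s ∈ J → ∀ s, c s ∈ K) :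
    Module.length A (A ⧸ J ⊔ Ideal.span (Set.range m)) +
      Fintype.card S * Module.length A (A ⧸ K) ≤ Module.length A (A ⧸ J) := by
  rw [length_quotient_eq_add J m, ← length_pi_quotient]
  gcongr
  refine Module.length_le_of_surjective (Submodule.factor fun c hc ↦ ?_)
    (Submodule.factor_surjective _)
  rw [LinearMap.mem_ker, LinearMap.comp_apply, Submodule.mkQ_apply, Submodule.Quotient.mk_eq_zero,
    Fintype.linearCombination_apply] at hc
  exact fun s _ ↦ h c hc s

end Colength

section Forms

open MvPolynomial

variable {A σ : Type*} [CommRing A] [Fintype σ] [DecidableEq σ] {n : ℕ}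

/-- The exponents of the monomials of degree `n`, as a finite type which indexes the coefficients
of a form of degree `n`. -/
abbrev FormExponent (σ : Type*) [Fintype σ] [DecidableEq σ] (n : ℕ) : Type _ :=
  ↥((Finset.univ : Finset σ).finsuppAntidiag n)

lemma FormExponent.degree_eq (s : FormExponent σ n) : s.1.degree = n := by
  rw [Finsupp.degree_eq_sum]
  exact (Finset.mem_finsuppAntidiag.1 s.2).1

lemma mem_finsuppAntidiag_univ_of_degree_eq {α : σ →₀ ℕ} (hα : α.degree = n) :
    α ∈ (Finset.univ : Finset σ).finsuppAntidiag n :=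
  Finset.mem_finsuppAntidiag.2 ⟨by rwa [Finsupp.degree_eq_sum] at hα, Finset.subset_univ _⟩

lemma FormExponent.card_fin (D n : ℕ) :
    Fintype.card (FormExponent (Fin (D + 1)) n) = (n + D).choose D := by
  rw [Fintype.card_coe, Finset.card_finsuppAntidiag_nat_eq_choose, Finset.card_univ,
    Fintype.card_fin, ← Nat.choose_symm_add, add_comm n D]
  congr 1
  omega

/-- The form of degree `n` with the given coefficients. It expresses a linear combination of the
monomials of degree `n` in the `a i` as the value of a form at `a`. -/
noncomputable def formOfCoeff (c : FormExponent σ n → A) : MvPolynomial σ A :=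
  ∑ s, monomial s.1 (c s)

lemma formOfCoeff_isHomogeneous (c : FormExponent σ n → A) : (formOfCoeff c).IsHomogeneous n :=
  IsHomogeneous.sum _ _ _ fun s _ ↦ isHomogeneous_monomial _ s.degree_eq

lemma coeff_formOfCoeff (c : FormExponent σ n → A) (s : FormExponent σ n) :
    coeff s.1 (formOfCoeff c) = c s := by
  simp only [formOfCoeff, coeff_sum, coeff_monomial, Subtype.coe_inj, Finset.sum_ite_eq',
    Finset.mem_univ, if_true]

lemma eval_formOfCoeff (a : σ → A) (c : FormExponent σ n → A) :
    eval a (formOfCoeff c) = ∑ s, c s * eval a (monomial s.1 1) := by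
  simp only [formOfCoeff, map_sum, eval_monomial, one_mul]

lemma span_range_eval_monomial (a : σ → A) (n : ℕ) :
    Ideal.span (Set.range fun s : FormExponent σ n ↦ eval a (monomial s.1 1)) =
      Ideal.span (Set.range a) ^ n := by
  refine le_antisymm (Ideal.span_le.2 ?_) fun x hx ↦ ?_
  · rintro _ ⟨s, rfl⟩
    exact (Ideal.mem_span_pow_iff_exists_isHomogeneous a _).2
      ⟨_, isHomogeneous_monomial _ s.degree_eq, rfl⟩
  · obtain ⟨F, hF, rfl⟩ := (Ideal.mem_span_pow_iff_exists_isHomogeneous a _).1 hx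
    rw [F.as_sum, map_sum]
    refine Submodule.sum_mem _ fun α hα ↦ ?_
    rw [← mul_one (coeff α F), ← C_mul_monomial, map_mul]
    have hdeg : α.degree = n := not_imp_comm.1 hF.coeff_eq_zero (mem_support_iff.1 hα)
    exact Ideal.mul_mem_left _ _
      (Ideal.subset_span ⟨⟨α, mem_finsuppAntidiag_univ_of_degree_eq hdeg⟩, rfl⟩)

end Forms

section PowerLength

open MvPolynomial

variable {A : Type*} [CommRing A] {D : ℕ} {a : Fin (D + 1) → A}

lemma length_quotient_mul_span_pow_le (J : Ideal A) (a : Fin (D + 1) → A) (n : ℕ) :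
    Module.length A (A ⧸ J * Ideal.span (Set.range a) ^ n) ≤
      Module.length A (A ⧸ Ideal.span (Set.range a) ^ n) +
        ((n + D).choose D : ℕ) * Module.length A (A ⧸ J) := by
  have h := length_quotient_le_add (J := J * Ideal.span (Set.range a) ^ n) (K := J)
    (m := fun s : FormExponent (Fin (D + 1)) n ↦ eval a (monomial s.1 (1 : A))) fun c hc s ↦
      Ideal.mul_mem_mul hc (span_range_eval_monomial a n ▸ Ideal.subset_span ⟨s, rfl⟩)
  rwa [span_range_eval_monomial, FormExponent.card_fin, sup_eq_right.2 Ideal.mul_le_right] at h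

lemma IsQuasiRegularFamily.length_quotient_span_pow_succ (ha : IsQuasiRegularFamily a) (n : ℕ) :
    Module.length A (A ⧸ Ideal.span (Set.range a) ^ (n + 1)) =
      Module.length A (A ⧸ Ideal.span (Set.range a) ^ n) +
        ((n + D).choose D : ℕ) * Module.length A (A ⧸ Ideal.span (Set.range a)) := by
  refine le_antisymm ?_ ?_
  · rw [pow_succ']
    exact length_quotient_mul_span_pow_le _ a n
  · have h := add_le_length_quotient (J := Ideal.span (Set.range a) ^ (n + 1))
      (K := Ideal.span (Set.range a))
      (m := fun s : FormExponent (Fin (D + 1)) n ↦ eval a (monomial s.1 (1 : A))) fun c hc s ↦ by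
        rw [← eval_formOfCoeff, pow_succ'] at hc
        rw [← coeff_formOfCoeff c]
        exact mem_map_C_iff.1
          (ha.mem_map_of_eval_mem le_rfl (formOfCoeff_isHomogeneous c) hc) s.1
    rwa [span_range_eval_monomial, FormExponent.card_fin,
      sup_eq_right.2 (Ideal.pow_le_pow_right n.le_succ)] at h

lemma IsQuasiRegularFamily.length_quotient_span_pow (ha : IsQuasiRegularFamily a) (n : ℕ) :
    Module.length A (A ⧸ Ideal.span (Set.range a) ^ n) =
      ((n + D).choose (D + 1) : ℕ) * Module.length A (A ⧸ Ideal.span (Set.range a)) := by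
  induction n with
  | zero =>
    have : Subsingleton (A ⧸ Ideal.span (Set.range a) ^ 0) :=
      Ideal.Quotient.subsingleton_iff.2 ((pow_zero _).trans Ideal.one_eq_top)
    rw [Module.length_eq_zero, zero_add, Nat.choose_succ_self, Nat.cast_zero, zero_mul]
  | succ n ih =>
    rw [ha.length_quotient_span_pow_succ, ih, ← add_mul, ← Nat.cast_add, add_right_comm n 1 D,
      Nat.choose_succ_succ, add_comm]

lemma add_choose_le_length_quotient [IsLocalRing A] {J : Ideal A} {v : A} {n : ℕ}
    (h : ∀ f : MvPolynomial (Fin (D + 1)) A, f.IsHomogeneous n → map (residue A) f ≠ 0 →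
      eval a f * v ∉ J) :
    Module.length A (A ⧸ J ⊔ Ideal.span (Set.range a) ^ n * Ideal.span {v}) +
      ((n + D).choose D : ℕ) ≤ Module.length A (A ⧸ J) := by
  have hlen := add_le_length_quotient (J := J) (K := maximalIdeal A)
    (m := fun s : FormExponent (Fin (D + 1)) n ↦ eval a (monomial s.1 (1 : A)) * v) fun c hc s ↦ by
      by_contra hcs
      refine h _ (formOfCoeff_isHomogeneous c) (fun h0 ↦ hcs ?_) ?_
      · rw [← coeff_formOfCoeff c]
        exact mem_map_C_iff.1 (map_residue_eq_zero_iff.1 h0) s.1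
      · simpa only [eval_formOfCoeff, Finset.sum_mul, mul_assoc] using hc
  have hspan : Ideal.span (Set.range fun s : FormExponent (Fin (D + 1)) n ↦
      eval a (monomial s.1 (1 : A)) * v) = Ideal.span (Set.range a) ^ n * Ideal.span {v} := by
    rw [← span_range_eval_monomial, Ideal.span_mul_span', Set.mul_singleton, ← Set.range_comp]
    rfl
  have : IsSimpleModule A (A ⧸ maximalIdeal A) :=
    isSimpleModule_iff_isCoatom.2 (maximalIdeal.isMaximal A).out
  rwa [hspan, FormExponent.card_fin, Module.length_eq_one A (A ⧸ maximalIdeal A), mul_one] at hlen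

end PowerLength

section Asymptotics

open Filter Topology

lemma tendsto_choose_div_pow (k : ℕ) :
    Tendsto (fun n : ℕ ↦ (n.choose k : ℝ) / (n : ℝ) ^ k) atTop (𝓝 (1 / k.factorial)) := by
  refine ((isEquivalent_choose k).div Asymptotics.IsEquivalent.refl).symm.tendsto_nhds
    (tendsto_const_nhds.congr' ?_)
  filter_upwards [eventually_gt_atTop 0] with n hn
  have : (n : ℝ) ^ k ≠ 0 := by positivity
  simp only [Pi.div_apply]
  field_simp

lemma tendsto_choose_add_div_pow (s k : ℕ) :
    Tendsto (fun n : ℕ ↦ ((n + s).choose k : ℝ) / (n : ℝ) ^ k) atTop (𝓝 (1 / k.factorial)) := by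
  have hratio : Tendsto (fun n : ℕ ↦ (1 + s / n : ℝ) ^ k) atTop (𝓝 ((1 + 0) ^ k)) :=
    ((tendsto_const_div_atTop_nhds_zero_nat (s : ℝ)).const_add 1).pow k
  have hmul := ((tendsto_choose_div_pow k).comp (tendsto_add_atTop_nat s)).mul hratio
  rw [add_zero, one_pow, mul_one] at hmul
  refine hmul.congr' ?_
  filter_upwards [eventually_gt_atTop 0] with n hn
  have hn0 : (n : ℝ) ≠ 0 := by positivity
  have : ((n + s : ℕ) : ℝ) ≠ 0 := by positivity
  rw [Function.comp_apply, one_add_div hn0, ← Nat.cast_add, div_pow]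
  field_simp

lemma tendsto_choose_add_div_pow_of_lt (s : ℕ) {j k : ℕ} (hjk : j < k) :
    Tendsto (fun n : ℕ ↦ ((n + s).choose j : ℝ) / (n : ℝ) ^ k) atTop (𝓝 0) := by
  have hinv : Tendsto (fun n : ℕ ↦ ((n : ℝ) ^ (k - j))⁻¹) atTop (𝓝 0) :=
    tendsto_inv_atTop_zero.comp ((tendsto_pow_atTop (by omega)).comp tendsto_natCast_atTop_atTop)
  have hmul := (tendsto_choose_add_div_pow s j).mul hinv
  rw [mul_zero] at hmul
  refine hmul.congr fun n ↦ ?_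
  rw [← div_eq_mul_inv, div_div, ← pow_add, Nat.add_sub_cancel' hjk.le]

/-- The integers `e 0, …, e d` are the Hilbert coefficients of the numerical function `H`: for large
`n`, the value `H n` is the sum of `(-1) ^ i * e i * (n + d - i).choose (d - i)`. For
`H n = ℓ (A ⧸ I ^ (n + 1))` these are the Hilbert coefficients of the ideal `I`. -/
def HasHilbertCoefficients (H : ℕ → ℕ) (d : ℕ) (e : ℕ → ℤ) : Prop :=
  ∀ᶠ n in atTop, (H n : ℤ) =
    ∑ i ∈ Finset.range (d + 1), (-1) ^ i * e i * ((n + d - i).choose (d - i) : ℤ)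

namespace HasHilbertCoefficients

variable {H : ℕ → ℕ} {D : ℕ} {e : ℕ → ℤ}

lemma eventually_sub_eq_sum (h : HasHilbertCoefficients H (D + 1) e) :
    ∀ᶠ n : ℕ in atTop,
      (H n : ℝ) - (e 0 * (n + (D + 1)).choose (D + 1) - e 1 * (n + D).choose D) =
        ∑ i ∈ Finset.range D, (-1) ^ i * (e (i + 2) : ℝ) *
          (n + D - (i + 1)).choose (D - (i + 1)) := by
  filter_upwards [h] with n hn
  have hH : (H n : ℝ) = ((H n : ℤ) : ℝ) := (Int.cast_natCast _).symm
  rw [hH, hn, Finset.sum_range_succ', Finset.sum_range_succ']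
  push_cast
  simp only [pow_add, pow_one, one_mul, mul_neg, mul_one, neg_neg, Nat.sub_zero,
    Nat.add_sub_add_right, Nat.add_sub_cancel, ← add_assoc]
  ring

lemma tendsto_remainder (h : HasHilbertCoefficients H (D + 1) e) (t : ℕ) {k : ℕ} (hk : D ≤ k) :
    Tendsto (fun n : ℕ ↦ ((H (n + t) : ℝ) -
      (e 0 * (n + t + (D + 1)).choose (D + 1) - e 1 * (n + t + D).choose D)) / (n : ℝ) ^ k)
      atTop (𝓝 0) := by
  have hsum : Tendsto (fun n : ℕ ↦ ∑ i ∈ Finset.range D, (-1) ^ i * (e (i + 2) : ℝ) *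
      (((n + (t + D - (i + 1))).choose (D - (i + 1)) : ℝ) / (n : ℝ) ^ k)) atTop
      (𝓝 (∑ i ∈ Finset.range D, (-1) ^ i * (e (i + 2) : ℝ) * 0)) := by
    refine tendsto_finsetSum _ fun i hi ↦ ?_
    rw [Finset.mem_range] at hi
    exact (tendsto_choose_add_div_pow_of_lt _ (by omega)).const_mul _
  simp only [mul_zero, Finset.sum_const_zero] at hsum
  refine hsum.congr' ?_
  filter_upwards [(tendsto_add_atTop_nat t).eventually h.eventually_sub_eq_sum] with n hn
  rw [hn, Finset.sum_div]
  refine Finset.sum_congr rfl fun i hi ↦ ?_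
  rw [Finset.mem_range] at hi
  rw [mul_div_assoc, show n + t + D - (i + 1) = n + (t + D - (i + 1)) by omega]

lemma le_coeff_zero (h : HasHilbertCoefficients H (D + 1) e) {l r : ℕ}
    (hlow : ∀ n, l * (n + D).choose (D + 1) ≤ H (n + r)) : (l : ℤ) ≤ e 0 := by
  have hleft := (tendsto_choose_add_div_pow D (D + 1)).const_mul (l : ℝ)
  have hright := (((tendsto_choose_add_div_pow (r + (D + 1)) (D + 1)).const_mul (e 0 : ℝ)).sub
    ((tendsto_choose_add_div_pow_of_lt (r + D) D.lt_succ_self).const_mul (e 1 : ℝ))).add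
    (h.tendsto_remainder r D.le_succ)
  have hlim := le_of_tendsto_of_tendsto' hleft hright fun n ↦ by
    have hn : ((l * (n + D).choose (D + 1) : ℕ) : ℝ) ≤ H (n + r) := Nat.cast_le.2 (hlow n)
    rw [← mul_div_assoc, ← mul_div_assoc, ← mul_div_assoc, ← sub_div, ← add_div]
    gcongr
    simpa only [← add_assoc, add_sub_cancel, Nat.cast_mul] using hn
  rw [mul_zero, sub_zero, add_zero] at hlim
  exact_mod_cast le_of_mul_le_mul_right hlim (by positivity)

lemma coeff_zero_sub_add_two_le (h : HasHilbertCoefficients H (D + 1) e) {c l p q : ℕ}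
    (hl : (l : ℤ) ≤ e 0)
    (hup : ∀ m, H (m + p + q) + (m + q + D).choose D + (m + p + D).choose D ≤
      l * (m + p + q + D).choose (D + 1) + (m + p + q + D).choose D * c) :
    e 0 - c + 2 ≤ e 1 := by
  have hleft := (tendsto_choose_add_div_pow (q + D) D).add (tendsto_choose_add_div_pow (p + D) D)
  have hright := ((tendsto_choose_add_div_pow (p + q + D) D).const_mul
    ((c : ℝ) - e 0 + e 1)).sub (h.tendsto_remainder (p + q) le_rfl)
  have hlim := le_of_tendsto_of_tendsto' hleft hright fun m ↦ by
    have hm : ((H (m + p + q) + (m + q + D).choose D + (m + p + D).choose D : ℕ) : ℝ) ≤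
        ((l * (m + p + q + D).choose (D + 1) + (m + p + q + D).choose D * c : ℕ) : ℝ) :=
      Nat.cast_le.2 (hup m)
    have hl' : (l : ℝ) ≤ e 0 := by exact_mod_cast hl
    have hmul := mul_le_mul_of_nonneg_right hl' ((m + p + q + D).choose (D + 1)).cast_nonneg
    rw [← mul_div_assoc, ← add_div, ← sub_div]
    gcongr
    simp only [← add_assoc, Nat.choose_succ_succ, Nat.succ_eq_add_one] at hm ⊢
    push_cast at hm ⊢
    linarith
  have hfact : (0 : ℝ) < 1 / D.factorial := by positivity
  have hreal : (2 : ℝ) ≤ c - e 0 + e 1 := by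
    refine le_of_mul_le_mul_right ?_ hfact
    linarith
  have hint : (2 : ℤ) ≤ c - e 0 + e 1 := by exact_mod_cast hreal
  linarith

end HasHilbertCoefficients

end Asymptotics

section FormDependent

open MvPolynomial

variable {A σ : Type*} [CommRing A] [IsLocalRing A] {I : Ideal A}

/-- In the module `⨁ I ^ (n + 1) / I Q ^ n` over the ring of forms in the generators `a` of `Q`, any
elements `u ≠ 0` and `v`, of degrees `p` and `q`, satisfy a relation `f v = h u` in which the form
`f` is nonzero modulo the maximal ideal. For quasi-regular `a` this says that the module has rank at
most one over the polynomial ring in `σ` over the residue field; in this form the bound on `e₁`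
controls the powers of `I`. -/
def IsFormDependent (a : σ → A) (I : Ideal A) : Prop :=
  ∀ (p q : ℕ) (u v : A), u ∈ I ^ (p + 1) → u ∉ I * Ideal.span (Set.range a) ^ p →
    v ∈ I ^ (q + 1) → ∃ (i j : ℕ) (f h : MvPolynomial σ A),
      f.IsHomogeneous j ∧ map (residue A) f ≠ 0 ∧ h.IsHomogeneous i ∧ i + p = j + q ∧
      eval a f * v - eval a h * u ∈ I * Ideal.span (Set.range a) ^ (j + q)

lemma IsFormDependent.maximalIdeal_mul_pow_le {a : σ → A} (hdep : IsFormDependent a I)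
    (ha : IsQuasiRegularFamily a) (hQI : Ideal.span (Set.range a) ≤ I) (q : ℕ) :
    maximalIdeal A * I ^ (q + 1) ≤ I * Ideal.span (Set.range a) ^ q := by
  refine Ideal.mul_le.2 fun c hc v hv ↦ ?_
  by_contra hcv
  obtain ⟨i, j, f, h, hf, hf0, hh, hij, hfh⟩ :=
    hdep q q (c * v) v (Ideal.mul_mem_left _ _ hv) hcv hv
  obtain rfl : i = j := by omega
  have hfc0 : map (residue A) (f - C c * h) ≠ 0 := by
    rwa [map_sub, map_mul, map_C, (residue_eq_zero_iff c).2 hc, C_0, zero_mul, sub_zero]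
  have heval : eval a (f - C c * h) * v = eval a f * v - eval a h * (c * v) := by
    rw [map_sub, map_mul, eval_C]
    ring
  exact hcv (Ideal.mul_mem_left _ _ (ha.mem_mul_pow_of_eval_mul_mem hQI (hf.sub (hh.C_mul c)) hfc0
    (heval ▸ hfh)))

lemma pow_add_eq_pow_mul_pow {A : Type*} [CommRing A] {I Q : Ideal A} {r : ℕ}
    (hr : I ^ (r + 1) = Q * I ^ r) (n : ℕ) : I ^ (n + r) = Q ^ n * I ^ r := by
  induction n with
  | zero => rw [zero_add, pow_zero, one_mul]
  | succ n ih =>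
    rw [add_right_comm, pow_succ, ih, mul_assoc, ← pow_succ, hr, pow_succ, mul_assoc]

variable {D : ℕ} {a : Fin (D + 1) → A}

lemma IsQuasiRegularFamily.length_quotient_pow_add_choose_add_choose_le
    (ha : IsQuasiRegularFamily a) (hQI : Ideal.span (Set.range a) ≤ I) {p q : ℕ} {u v : A}
    (hu : u ∈ I ^ (p + 1)) (huI : u ∉ I * Ideal.span (Set.range a) ^ p) (hv : v ∈ I ^ (q + 1))
    (m : ℕ) (hindep : ∀ f h : MvPolynomial (Fin (D + 1)) A, f.IsHomogeneous (m + p) →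
      map (residue A) f ≠ 0 → h.IsHomogeneous (m + q) →
      eval a f * v - eval a h * u ∉ I * Ideal.span (Set.range a) ^ (m + p + q)) :
    Module.length A (A ⧸ I ^ (m + p + q + 1)) + ((m + q + D).choose D : ℕ) +
      ((m + p + D).choose D : ℕ) ≤
        Module.length A (A ⧸ I * Ideal.span (Set.range a) ^ (m + p + q)) := by
  set Q := Ideal.span (Set.range a)
  set J := I * Q ^ (m + p + q) ⊔ Q ^ (m + q) * Ideal.span {u}
  have hstep_u := add_choose_le_length_quotient (a := a) (J := I * Q ^ (m + p + q)) (v := u)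
    (n := m + q) fun f hf hf0 hfu ↦ by
      rw [add_right_comm] at hfu
      exact huI (ha.mem_mul_pow_of_eval_mul_mem hQI hf hf0 hfu)
  have hstep_v := add_choose_le_length_quotient (a := a) (J := J) (v := v) (n := m + p)
    fun f hf hf0 hfv ↦ by
      obtain ⟨w, hw, z, hz, hwz⟩ := Submodule.mem_sup.1 hfv
      obtain ⟨t, ht, rfl⟩ := Ideal.mem_mul_span_singleton.1 hz
      obtain ⟨h, hh, rfl⟩ := (Ideal.mem_span_pow_iff_exists_isHomogeneous a _).1 ht
      exact hindep f h hf hf0 hh (by rwa [← hwz, add_sub_cancel_right])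
  have hle : J ⊔ Q ^ (m + p) * Ideal.span {v} ≤ I ^ (m + p + q + 1) := by
    refine sup_le (sup_le ?_ ?_) ?_
    · rw [pow_succ']
      exact Ideal.mul_mono_right (Ideal.pow_right_mono hQI _)
    · rw [show m + p + q + 1 = m + q + (p + 1) by omega, pow_add I]
      exact Ideal.mul_mono (Ideal.pow_right_mono hQI _) ((Ideal.span_singleton_le_iff_mem _).2 hu)
    · rw [add_assoc (m + p), pow_add I]
      exact Ideal.mul_mono (Ideal.pow_right_mono hQI _) ((Ideal.span_singleton_le_iff_mem _).2 hv)
  calc Module.length A (A ⧸ I ^ (m + p + q + 1)) + ((m + q + D).choose D : ℕ) +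
        ((m + p + D).choose D : ℕ)
    _ ≤ Module.length A (A ⧸ J ⊔ Q ^ (m + p) * Ideal.span {v}) + ((m + q + D).choose D : ℕ) +
        ((m + p + D).choose D : ℕ) := by gcongr; exact length_quotient_anti hle
    _ = Module.length A (A ⧸ J ⊔ Q ^ (m + p) * Ideal.span {v}) + ((m + p + D).choose D : ℕ) +
        ((m + q + D).choose D : ℕ) := add_right_comm _ _ _
    _ ≤ Module.length A (A ⧸ J) + ((m + q + D).choose D : ℕ) := by gcongr
    _ ≤ Module.length A (A ⧸ I * Q ^ (m + p + q)) := hstep_u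

lemma length_quotient_pow_le_of_pow_succ_eq {A : Type*} [CommRing A] {I Q : Ideal A} {r : ℕ}
    (hr : I ^ (r + 1) = Q * I ^ r) (n : ℕ) :
    Module.length A (A ⧸ Q ^ n) ≤ Module.length A (A ⧸ I ^ (n + r + 1)) := by
  refine length_quotient_anti ?_
  rw [pow_succ, pow_add_eq_pow_mul_pow hr n]
  exact Ideal.mul_le_left.trans Ideal.mul_le_left

-- The parameter ideal gives `ℓ (A ⧸ Q) ≤ e₀`; two elements without a relation would then contribute
-- twice the leading term of a polynomial of degree `d - 1`, so `e₁ ≥ e₀ - ℓ (A ⧸ I) + 2`.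
lemma IsQuasiRegularFamily.isFormDependent (ha : IsQuasiRegularFamily a)
    (hQI : Ideal.span (Set.range a) ≤ I) {r : ℕ}
    (hr : I ^ (r + 1) = Ideal.span (Set.range a) * I ^ r) {H : ℕ → ℕ}
    (hH : ∀ n, Module.length A (A ⧸ I ^ (n + 1)) = H n) {e : ℕ → ℤ}
    (hHe : HasHilbertCoefficients H (D + 1) e) (he : e 1 ≤ e 0 - (H 0 : ℤ) + 1) :
    IsFormDependent a I := by
  intro p q u v hu huI hv
  by_contra! hindep
  have hle (n : ℕ) : Module.length A (A ⧸ Ideal.span (Set.range a) ^ n) ≤ H (n + r) :=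
    hH (n + r) ▸ length_quotient_pow_le_of_pow_succ_eq hr n
  have hQ := hle 1
  rw [pow_one] at hQ
  obtain ⟨l, hl⟩ := ENat.ne_top_iff_exists.1 (ne_top_of_le_ne_top (ENat.natCast_ne_top _) hQ)
  have hpow (n : ℕ) : Module.length A (A ⧸ Ideal.span (Set.range a) ^ n) =
      (l * (n + D).choose (D + 1) : ℕ) := by
    rw [ha.length_quotient_span_pow, ← hl, ← Nat.cast_mul, mul_comm]
  have hl0 : (l : ℤ) ≤ e 0 := hHe.le_coeff_zero fun n ↦ by exact_mod_cast hpow n ▸ hle n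
  have hI : Module.length A (A ⧸ I) = H 0 := by
    have hH0 := hH 0
    rwa [zero_add, pow_one] at hH0
  have hup := hHe.coeff_zero_sub_add_two_le (c := H 0) (p := p) (q := q) hl0 fun m ↦ by
    have hlen := (ha.length_quotient_pow_add_choose_add_choose_le hQI hu huI hv m
      fun f h hf hf0 hh ↦ hindep _ _ f h hf hf0 hh (by omega)).trans
      (length_quotient_mul_span_pow_le I a (m + p + q))
    rw [hH, hpow, hI] at hlen
    exact_mod_cast hlen
  omega

end FormDependent

section PowThree

open MvPolynomial

variable {A σ : Type*} [CommRing A] [IsLocalRing A] {a : σ → A} {I J : Ideal A}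

lemma IsFormDependent.mem_mul_pow_two (hdep : IsFormDependent a I) (ha : IsQuasiRegularFamily a)
    (hQI : Ideal.span (Set.range a) ≤ I) {y z : A} (hy : y ∈ I ^ 2) {j : ℕ}
    {f h : MvPolynomial σ A} (hf : f.IsHomogeneous j) (hf0 : map (residue A) f ≠ 0)
    (hh : h.IsHomogeneous (j + 1))
    (hfh : eval a f * z - eval a h * y ∈ I * Ideal.span (Set.range a) ^ (j + 2))
    (hdvd : map (residue A) f ∣ map (residue A) h) : z ∈ Ideal.span (Set.range a) * I ^ 2 := by
  obtain ⟨g, hg, hfg⟩ := exists_isHomogeneous_sub_mul_mem_map_C hf hh hdvd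
  have hgQ : eval a g ∈ Ideal.span (Set.range a) ^ 1 :=
    (Ideal.mem_span_pow_iff_exists_isHomogeneous a _).2 ⟨g, hg, rfl⟩
  set Q := Ideal.span (Set.range a)
  have herr : eval a (h - f * g) * y ∈ I * Q ^ (j + 2) := by
    have hmem : eval a (h - f * g) ∈ maximalIdeal A * Q ^ (j + 1) :=
      (mem_mul_span_pow_iff _ a _ _).2 ⟨_, hh.sub (hf.mul hg), hfg, rfl⟩
    have hle : maximalIdeal A * Q ^ (j + 1) * I ^ 2 ≤ I * Q ^ (j + 2) := calc
      _ = maximalIdeal A * I ^ (1 + 1) * Q ^ (j + 1) := by ring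
      _ ≤ I * Q ^ 1 * Q ^ (j + 1) :=
        Ideal.mul_mono_left (hdep.maximalIdeal_mul_pow_le ha hQI 1)
      _ = I * Q ^ (j + 2) := by ring
    exact hle (Ideal.mul_mem_mul hmem hy)
  have hzg : z - eval a g * y ∈ I * Q ^ 2 := by
    refine ha.mem_mul_pow_of_eval_mul_mem hQI hf hf0 ?_
    have hsplit : eval a f * (z - eval a g * y) =
        (eval a f * z - eval a h * y) + eval a (h - f * g) * y := by
      rw [map_sub, map_mul]
      ring
    exact hsplit ▸ add_mem hfh herr
  have hle : I * Q ^ 2 ≤ Q * I ^ 2 := by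
    rw [pow_two, pow_two, mul_left_comm]
    exact Ideal.mul_mono_right (Ideal.mul_mono_right hQI)
  rw [← sub_add_cancel z (eval a g * y)]
  exact add_mem (hle hzg) (Ideal.mul_mem_mul (pow_one Q ▸ hgQ) hy)

lemma IsQuasiRegularFamily.map_residue_dvd_of_notMem (ha : IsQuasiRegularFamily a) {y z : A}
    (hy : y ∉ Ideal.span (Set.range a)) {j n : ℕ} {f h : MvPolynomial σ A}
    (hf : f.IsHomogeneous j) (hf0 : map (residue A) f ≠ 0) (hh : h.IsHomogeneous (j + n))
    (hfh : eval a f * z - eval a h * y ∈ Ideal.span (Set.range a) ^ (j + n + 1)) :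
    map (residue A) f ∣ map (residue A) h := by
  set Q := Ideal.span (Set.range a)
  have hz : z ∈ (Q ⊔ Ideal.span {y}) * Q ^ n := by
    refine ha.mem_mul_pow_of_eval_mul_mem le_sup_left hf hf0 ?_
    rw [← sub_add_cancel (eval a f * z) (eval a h * y)]
    refine add_mem (Ideal.mul_mono_left le_sup_left ?_) ?_
    · rwa [← pow_succ']
    · rw [mul_comm (eval a h)]
      exact Ideal.mul_mem_mul (Ideal.mem_sup_right (Ideal.mem_span_singleton_self y))
        ((Ideal.mem_span_pow_iff_exists_isHomogeneous a _).2 ⟨h, hh, rfl⟩)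
  rw [Ideal.sup_mul, ← pow_succ', mul_comm (Ideal.span {y})] at hz
  obtain ⟨w, hw, t, ht, rfl⟩ := Submodule.mem_sup.1 hz
  obtain ⟨c, hc, rfl⟩ := Ideal.mem_mul_span_singleton.1 ht
  obtain ⟨g, hg, rfl⟩ := (Ideal.mem_span_pow_iff_exists_isHomogeneous a _).1 hc
  refine ⟨map (residue A) g, ?_⟩
  rw [← map_mul, ← sub_eq_zero, ← map_sub]
  by_contra hne
  have hfw : eval a f * w ∈ Q ^ (j + n + 1) := by
    rw [add_assoc, pow_add]
    exact Ideal.mul_mem_mul ((Ideal.mem_span_pow_iff_exists_isHomogeneous a _).2 ⟨f, hf, rfl⟩) hw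
  have hsplit : eval a (h - f * g) * y =
      eval a f * w - (eval a f * (w + eval a g * y) - eval a h * y) := by
    rw [map_sub, map_mul]
    ring
  have hmem := ha.mem_pow_of_eval_mul_mem (hh.sub (hf.mul hg)) hne (m := 1)
    (hsplit ▸ sub_mem hfw hfh)
  exact hy (pow_one Q ▸ hmem)

lemma IsFormDependent.pow_three_le_of_not_le (hdep : IsFormDependent a I)
    (ha : IsQuasiRegularFamily a) (hQI : Ideal.span (Set.range a) ≤ I)
    (hI : ¬ I ^ 2 ≤ Ideal.span (Set.range a)) : I ^ 3 ≤ Ideal.span (Set.range a) * I ^ 2 := by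
  obtain ⟨y, hy, hyQ⟩ := SetLike.not_le_iff_exists.1 hI
  intro z hz
  obtain ⟨i, j, f, h, hf, hf0, hh, hij, hfh⟩ := hdep 1 2 y z hy
    (fun h ↦ hyQ (pow_one (Ideal.span (Set.range a)) ▸ Ideal.mul_le_right h)) hz
  obtain rfl : i = j + 1 := by omega
  exact hdep.mem_mul_pow_two ha hQI hy hf hf0 hh hfh
    (ha.map_residue_dvd_of_notMem hyQ hf hf0 hh (Ideal.mul_le_right hfh))

lemma IsFormDependent.pow_le_mul_pow (hdep : IsFormDependent a I) (ha : IsQuasiRegularFamily a)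
    (hQI : Ideal.span (Set.range a) ≤ I) (hIJ : I ≤ J) {p : ℕ} {u : A} (hu : u ∈ I ^ (p + 1))
    (huI : u ∉ I * Ideal.span (Set.range a) ^ p) (huJ : u ∈ J * Ideal.span (Set.range a) ^ p)
    (n : ℕ) : I ^ (n + 1) ≤ J * Ideal.span (Set.range a) ^ n := by
  intro v hv
  obtain ⟨i, j, f, h, hf, hf0, hh, hij, hfh⟩ := hdep p n u v hu huI hv
  refine ha.mem_mul_pow_of_eval_mul_mem (hQI.trans hIJ) hf hf0 ?_
  rw [← sub_add_cancel (eval a f * v) (eval a h * u)]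
  refine add_mem (Ideal.mul_mono_left hIJ hfh) ?_
  rw [← hij, pow_add, mul_left_comm]
  exact Ideal.mul_mem_mul ((Ideal.mem_span_pow_iff_exists_isHomogeneous a _).2 ⟨h, hh, rfl⟩) huJ

lemma IsFormDependent.maximalIdeal_mul_coeffIdeal_le (hdep : IsFormDependent a I)
    (ha : IsQuasiRegularFamily a) (hQI : Ideal.span (Set.range a) ≤ I) {n : ℕ}
    {Y : MvPolynomial σ A} (hY : Y.IsHomogeneous n) (hy : eval a Y ∈ I ^ (n + 1)) :
    maximalIdeal A * coeffIdeal Y ≤ I := by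
  refine Ideal.mul_le.2 fun c hc x hx ↦ ?_
  have hcY : C c * Y ∈ I.map C := by
    refine ha.mem_map_of_eval_mem hQI (hY.C_mul c) (hdep.maximalIdeal_mul_pow_le ha hQI n ?_)
    rw [map_mul, eval_C]
    exact Ideal.mul_mem_mul hc hy
  have hle : coeffIdeal Y ≤ Submodule.comap (LinearMap.mulLeft A c) I := by
    refine mem_map_C_iff_coeffIdeal_le.1 (mem_map_C_iff.2 fun α ↦ ?_)
    rw [Submodule.mem_comap, LinearMap.mulLeft_apply, ← coeff_C_mul]
    exact mem_map_C_iff.1 hcY α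
  exact hle hx

lemma pow_three_le_of_le_sup_span {A : Type*} [CommRing A] {I J Q : Ideal A} {x : A} (hQI : Q ≤ I)
    (hJ : J ≤ I ⊔ Ideal.span {x}) (hI : I ^ 2 ≤ J * Q) (hx : ∀ t ∈ I, x * t ∈ J * Q) :
    I ^ 3 ≤ Q * I ^ 2 := by
  have hJQ {v : A} (hv : v ∈ J * Q) : ∃ w ∈ Q * I, ∃ l ∈ Q, w + l * x = v := by
    have hv' : v ∈ Q * I ⊔ Q * Ideal.span {x} := by
      rw [← Ideal.mul_sup, mul_comm]
      exact Ideal.mul_mono_left hJ hv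
    obtain ⟨w, hw, s, hs, rfl⟩ := Submodule.mem_sup.1 hv'
    obtain ⟨l, hl, rfl⟩ := Ideal.mem_mul_span_singleton.1 hs
    exact ⟨w, hw, l, hl, rfl⟩
  have hQI2 : Q * I ≤ I ^ 2 := pow_two I ▸ Ideal.mul_mono_left hQI
  rw [pow_succ]
  refine Ideal.mul_le.2 fun v hv t ht ↦ ?_
  obtain ⟨w, hw, l, hl, rfl⟩ := hJQ (hI hv)
  obtain ⟨w', hw', l', hl', hxt⟩ := hJQ (hx t ht)
  have hlx : l * x ∈ I ^ 2 := (Submodule.add_mem_iff_right _ (hQI2 hw)).1 hv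
  have hsplit : (w + l * x) * t = w * t + l * w' + l' * (l * x) := by
    linear_combination (-l) * hxt
  have hwt : w * t ∈ Q * I ^ 2 := by
    rw [pow_two, ← mul_assoc]
    exact Ideal.mul_mem_mul hw ht
  rw [hsplit]
  exact add_mem (add_mem hwt (Ideal.mul_mem_mul hl (hQI2 hw'))) (Ideal.mul_mem_mul hl' hlx)

lemma IsQuasiRegularFamily.mul_mem_mul_span (ha : IsQuasiRegularFamily a)
    (hQI : Ideal.span (Set.range a) ≤ I) (hQJ : Ideal.span (Set.range a) ≤ J)
    (hI : I ^ 3 ≤ J * Ideal.span (Set.range a) ^ 2) {x : A} {Y G : MvPolynomial σ A}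
    (hY : Y.IsHomogeneous 1) (hy : eval a Y ∈ I ^ 2) (hG : G.IsHomogeneous 1)
    (hG0 : map (residue A) G ≠ 0) (hYG : Y - C x * G ∈ I.map C) {t : A} (ht : t ∈ I) :
    x * t ∈ J * Ideal.span (Set.range a) := by
  rw [← pow_one (Ideal.span (Set.range a))]
  refine ha.mem_mul_pow_of_eval_mul_mem hQJ hG hG0 (hI ?_)
  have herr : eval a (Y - C x * G) ∈ I ^ 2 := by
    have hmem := (mem_mul_span_pow_iff I a 1 _).2 ⟨_, hY.sub (hG.C_mul x), hYG, rfl⟩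
    rw [pow_one] at hmem
    exact pow_two I ▸ Ideal.mul_mono_right hQI hmem
  have hsplit : eval a G * (x * t) = (eval a Y - eval a (Y - C x * G)) * t := by
    rw [map_sub, map_mul, eval_C]
    ring
  rw [hsplit, pow_succ]
  exact Ideal.mul_mem_mul (sub_mem hy herr) ht

lemma exists_mul_eq_map_residue_mul (hmJ : maximalIdeal A * J ≤ I) {x : A} (hxJ : x ∈ J)
    (hxI : x ∉ I) {n : ℕ} {f h Y Z : MvPolynomial σ A} (hY : Y.IsHomogeneous n)
    (hYJ : Y ∈ J.map C) (hZJ : Z ∈ J.map C) (hfh : f * Z - h * Y ∈ I.map C) :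
    ∃ K : Ideal A, I ≤ K ∧ x ∉ K ∧ ∃ L : MvPolynomial σ (ResidueField A), L.IsHomogeneous n ∧
      (∀ α, coeff α L = 0 ↔ coeff α Y ∈ K) ∧
      ∃ u, map (residue A) f * u = map (residue A) h * L := by
  obtain ⟨K, hIK, hxK, hJK⟩ := exists_ideal_le_sup_span hmJ hxI
  obtain ⟨L, hL, hYL⟩ := exists_isHomogeneous_sub_C_mul_mem_map_C hJK hY hYJ
  obtain ⟨u, hu⟩ := exists_sub_C_mul_mem_map_C hJK hZJ
  exact ⟨K, hIK, hxK, map (residue A) L, hL.map _,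
    coeff_map_residue_eq_zero_iff hxK (fun c hc ↦ hIK (hmJ (Ideal.mul_mem_mul hc hxJ))) hYL,
    map (residue A) u, map_residue_mul_eq_map_residue_mul hxK (Ideal.map_mono hIK hfh) hu hYL⟩

-- Modulo ideals `K₁` and `K₂` for which `J` becomes a simple module, the linear form `Y` becomes
-- `L₁` and `L₂`. These are not proportional, because only `L₁` has no term of exponent `s`.
lemma map_residue_dvd_of_notMem_sup_span (hmJ : maximalIdeal A * J ≤ I) {f h Y Z : MvPolynomial σ A}
    (hf0 : map (residue A) f ≠ 0) (hY : Y.IsHomogeneous 1) (hYJ : Y ∈ J.map C)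
    (hZJ : Z ∈ J.map C) (hfh : f * Z - h * Y ∈ I.map C) {s t : σ →₀ ℕ} (hs : coeff s Y ∉ I)
    (ht : coeff t Y ∉ I ⊔ Ideal.span {coeff s Y}) : map (residue A) f ∣ map (residue A) h := by
  obtain ⟨K₁, hIK₁, htK₁, L₁, hL₁, hcoeff₁, u₁, hu₁⟩ := exists_mul_eq_map_residue_mul
    (hmJ.trans le_sup_left) (mem_map_C_iff.1 hYJ t) ht hY hYJ hZJ (Ideal.map_mono le_sup_left hfh)
  obtain ⟨K₂, -, hsK₂, L₂, hL₂, hcoeff₂, u₂, hu₂⟩ :=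
    exists_mul_eq_map_residue_mul hmJ (mem_map_C_iff.1 hYJ s) hs hY hYJ hZJ hfh
  have hs₁ : coeff s L₁ = 0 :=
    (hcoeff₁ s).2 (hIK₁ (Ideal.mem_sup_right (Ideal.mem_span_singleton_self _)))
  have hL₁0 : L₁ ≠ 0 := by
    rintro rfl
    exact htK₁ ((hcoeff₁ t).1 (coeff_zero t))
  have hndvd : ¬ L₁ ∣ L₂ := by
    intro hdvd
    obtain ⟨c, rfl⟩ := exists_eq_mul_C_of_dvd hL₁ hL₂ hdvd
    exact hsK₂ ((hcoeff₂ s).1 (by rw [mul_comm, coeff_C_mul, hs₁, mul_zero]))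
  exact dvd_of_mul_eq_mul_of_prime (prime_of_isHomogeneous_one hL₁ hL₁0) hndvd hf0 hu₁ hu₂

lemma IsFormDependent.pow_three_le_of_notMem_sup_span (hdep : IsFormDependent a I)
    (ha : IsQuasiRegularFamily a) (hQI : Ideal.span (Set.range a) ≤ I)
    (hmJ : maximalIdeal A * J ≤ I) (hI : I ^ 3 ≤ J * Ideal.span (Set.range a) ^ 2)
    {Y : MvPolynomial σ A} (hY : Y.IsHomogeneous 1) (hy : eval a Y ∈ I ^ 2)
    (hyI : eval a Y ∉ I * Ideal.span (Set.range a) ^ 1) (hYJ : Y ∈ J.map C) {s t : σ →₀ ℕ}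
    (hs : coeff s Y ∉ I) (ht : coeff t Y ∉ I ⊔ Ideal.span {coeff s Y}) :
    I ^ 3 ≤ Ideal.span (Set.range a) * I ^ 2 := by
  intro z hz
  obtain ⟨i, j, f, h, hf, hf0, hh, hij, hfh⟩ := hdep 1 2 _ z hy hyI hz
  obtain rfl : i = j + 1 := by omega
  obtain ⟨Z, hZ, hZJ, rfl⟩ := (mem_mul_span_pow_iff J a 2 _).1 (hI hz)
  have hfZ : f * Z - h * Y ∈ I.map C := by
    refine ha.mem_map_of_eval_mem hQI ((hf.mul hZ).sub (hh.mul hY)) ?_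
    rwa [map_sub, map_mul, map_mul]
  exact hdep.mem_mul_pow_two ha hQI hy hf hf0 hh hfh
    (map_residue_dvd_of_notMem_sup_span hmJ hf0 hY hYJ hZJ hfZ hs ht)

lemma IsFormDependent.pow_three_le_of_eval_notMem (hdep : IsFormDependent a I)
    (ha : IsQuasiRegularFamily a) (hQI : Ideal.span (Set.range a) ≤ I) {Y : MvPolynomial σ A}
    (hY : Y.IsHomogeneous 1) (hy : eval a Y ∈ I ^ 2)
    (hyI : eval a Y ∉ I * Ideal.span (Set.range a)) :
    I ^ 3 ≤ Ideal.span (Set.range a) * I ^ 2 := by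
  have hmul (K : Ideal A) (hK : Y ∈ K.map C) : eval a Y ∈ K * Ideal.span (Set.range a) ^ 1 :=
    (mem_mul_span_pow_iff _ a 1 _).2 ⟨Y, hY, hK, rfl⟩
  rw [← pow_one (Ideal.span (Set.range a))] at hyI
  set J := I ⊔ coeffIdeal Y with hJ
  have hYJ : Y ∈ J.map C := mem_map_C_iff_coeffIdeal_le.2 le_sup_right
  have hmJ : maximalIdeal A * J ≤ I := by
    rw [hJ, Ideal.mul_sup]
    exact sup_le Ideal.mul_le_right (hdep.maximalIdeal_mul_coeffIdeal_le ha hQI hY hy)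
  have hpow := hdep.pow_le_mul_pow ha hQI le_sup_left hy hyI (hmul J hYJ)
  have hYI : Y ∉ I.map C := fun h ↦ hyI (hmul I h)
  obtain ⟨s, hs⟩ : ∃ s, coeff s Y ∉ I := by
    by_contra! h
    exact hYI (mem_map_C_iff.2 h)
  by_cases ht : ∃ t, coeff t Y ∉ I ⊔ Ideal.span {coeff s Y}
  · obtain ⟨t, ht⟩ := ht
    exact hdep.pow_three_le_of_notMem_sup_span ha hQI hmJ (hpow 2) hY hy hyI hYJ hs ht
  · push Not at ht
    have hJs : J ≤ I ⊔ Ideal.span {coeff s Y} :=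
      sup_le le_sup_left (mem_map_C_iff_coeffIdeal_le.1 (mem_map_C_iff.2 ht))
    obtain ⟨G, hG, hYG⟩ := exists_isHomogeneous_sub_C_mul_mem_map_C hJs hY hYJ
    have hG0 : map (residue A) G ≠ 0 := fun h0 ↦ hYI <| mem_map_C_of_map_residue_eq_zero
      (fun c hc ↦ hmJ (Ideal.mul_mem_mul hc (mem_map_C_iff.1 hYJ s))) hYG h0
    refine pow_three_le_of_le_sup_span hQI hJs ?_ fun x hx ↦
      ha.mul_mem_mul_span hQI (hQI.trans le_sup_left) (hpow 2) hY hy hG hG0 hYG hx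
    rw [← pow_one (Ideal.span (Set.range a))]
    exact hpow 1

theorem IsFormDependent.pow_three_eq (hdep : IsFormDependent a I) (ha : IsQuasiRegularFamily a)
    (hQI : Ideal.span (Set.range a) ≤ I) : I ^ 3 = Ideal.span (Set.range a) * I ^ 2 := by
  refine le_antisymm ?_ (pow_succ' I 2 ▸ Ideal.mul_mono_left hQI)
  by_cases hI2 : I ^ 2 ≤ Ideal.span (Set.range a)
  swap
  · exact hdep.pow_three_le_of_not_le ha hQI hI2
  by_cases hIQ : I ^ 2 ≤ I * Ideal.span (Set.range a)
  · calc I ^ 3 = I ^ 2 * I := pow_succ I 2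
      _ ≤ I * Ideal.span (Set.range a) * I := Ideal.mul_mono_left hIQ
      _ = Ideal.span (Set.range a) * I ^ 2 := by ring
  · obtain ⟨y, hy, hyI⟩ := SetLike.not_le_iff_exists.1 hIQ
    obtain ⟨Y, hY, rfl⟩ := (Ideal.mem_span_pow_iff_exists_isHomogeneous a (n := 1) y).1
      (by rw [pow_one]; exact hI2 hy)
    exact hdep.pow_three_le_of_eval_notMem ha hQI hY hy hyI

end PowThree

theorem pow_three_eq_of_e1_general (A : Type*) [CommRing A] [IsLocalRing A] [IsNoetherianRing A]
    (d : ℕ) (hd : 0 < d) (hCM : IsCohenMacaulayLocal A d) (I : Ideal A)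
    (hI : maximalIdeal A ≤ I.radical) (a : Fin d → A) (hQI : Ideal.span (Set.range a) ≤ I)
    (hred : ∃ r : ℕ, I ^ (r + 1) = Ideal.span (Set.range a) * I ^ r) (H : ℕ → ℕ)
    (hH : ∀ n : ℕ, moduleLength A (A ⧸ I ^ (n + 1)) = (H n : ℕ∞)) (e : ℕ → ℤ)
    (hHe : HasHilbertCoefficients H d e) (he : e 1 ≤ e 0 - (H 0 : ℤ) + 1) :
    I ^ 3 = Ideal.span (Set.range a) * I ^ 2 := by
  obtain ⟨-, rs, hlen, hmem, hrs⟩ := hCM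
  obtain ⟨r, hr⟩ := hred
  have hrad : maximalIdeal A ≤ (Ideal.span (Set.range a)).radical := calc
    maximalIdeal A ≤ I.radical := hI
    _ = (I ^ (r + 1)).radical := (Ideal.radical_pow I r.succ_ne_zero).symm
    _ ≤ (Ideal.span (Set.range a)).radical := Ideal.radical_mono (hr.trans_le Ideal.mul_le_left)
  obtain ⟨b, hb, hqr⟩ := exists_isQuasiRegularFamily hlen.ge hmem hrs a hrad
  rw [← hb] at hQI hr ⊢
  have hlength (n : ℕ) : Module.length A (A ⧸ I ^ (n + 1)) = H n := by
    have hn := hH n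
    rw [moduleLength, ← Module.coe_length] at hn
    exact_mod_cast hn
  obtain ⟨D, rfl⟩ := Nat.exists_eq_succ_of_ne_zero hd.ne'
  exact (hqr.isFormDependent hQI hr hlength hHe he).pow_three_eq hqr hQI

/-- If `e₁ = e₀ - ℓ_A(A/I) + 1` then `I³ = QI²`.  Here `H n = ℓ_A(A/I^{n+1})`
(so `H 0 = ℓ_A(A/I)`) and the Hilbert coefficients `e i` are specified by the
Hilbert–Samuel polynomial. -/
theorem pow_three_eq_of_e1 (A : Type*) [CommRing A] [IsLocalRing A] [IsNoetherianRing A]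
    [Infinite (ResidueField A)]
    (d : ℕ) (hd : 0 < d) (hCM : IsCohenMacaulayLocal A d)
    (I Q : Ideal A) (hI : IsPrimaryToMax A I)
    (a : Fin d → A) (hQ : Q = Ideal.span (Set.range a)) (hQI : Q ≤ I)
    (hred : ∃ r : ℕ, I ^ (r + 1) = Q * I ^ r)
    (H : ℕ → ℕ)
    (hH : ∀ n : ℕ, moduleLength A (A ⧸ I ^ (n + 1)) = (H n : ℕ∞))
    (e : ℕ → ℤ) (N : ℕ)
    (hHS : ∀ n ≥ N, (H n : ℤ) =
      ∑ i ∈ Finset.range (d + 1),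
        (-1) ^ i * e i * ((n + d - i).choose (d - i) : ℤ))
    (he : e 1 = e 0 - (H 0 : ℤ) + 1) :
    I ^ 3 = Q * I ^ 2 := by
  subst hQ
  exact pow_three_eq_of_e1_general A d hd hCM I hI.2 a hQI hred H hH e
    (Filter.eventually_atTop.2 ⟨N, hHS⟩) he.le
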